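/- arXiv:2211.12123 — 3 statements merged into one kernel-verified Lean document; each statement's English description precedes it below -/
import Mathlib

section
/- Let ν be a probability measure on a measurable space X, let μ be a probability measure with μ ≪ ν, and let r = dμ/dν denote the Radon–Nikodym derivative. Let φ : ℝ → ℝ be a convex function with φ(1) = 0, and let φ* be its Fenchel conjugate, φ*(t) = sup_{x ≥ 0} (x·t − φ(x)). Then for every measurable function T : X → ℝ such that T is μ-integrable, φ* ∘ T is ν-integrable, and φ ∘ r is ν-integrable, one has ∫ T dμ − ∫ φ*(T) dν ≤ ∫ φ(r) dν; that is, the variational functional E_μ[T] − E_ν[φ*∘T] is a lower bound on the f-divergence D_φ(μ‖ν). -/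
open MeasureTheory

/-- Variational lower bound for the f-divergence. Let `μ ≪ ν` be probability measures with
Radon–Nikodym derivative `r = dμ/dν`, let `φ` be convex with `φ(1) = 0`, and let `φstar` be
its Fenchel conjugate `φ*(t) = sup_{x ≥ 0} (x·t − φ(x))`. Then for every measurable `T`
with `T` `μ`-integrable, `φ* ∘ T` `ν`-integrable and `φ ∘ r` `ν`-integrable,
`∫ T dμ − ∫ φ*(T) dν ≤ ∫ φ(r) dν = D_φ(μ‖ν)`. -/
theorem variational_lower_bound {X : Type*} [MeasurableSpace X]
    (μ ν : Measure X) [IsProbabilityMeasure μ] [IsProbabilityMeasure ν] (hac : μ ≪ ν)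
    (φ φstar : ℝ → ℝ) (hconv : ConvexOn ℝ Set.univ φ) (hφ1 : φ 1 = 0)
    (hφstar : ∀ t, IsLUB {y | ∃ x, 0 ≤ x ∧ y = x * t - φ x} (φstar t))
    (T : X → ℝ) (hT : Measurable T) (hTμ : Integrable T μ)
    (hTν : Integrable (fun x => φstar (T x)) ν)
    (hφr : Integrable (fun x => φ ((μ.rnDeriv ν x).toReal)) ν) :
    ∫ x, T x ∂μ - ∫ x, φstar (T x) ∂ν ≤ ∫ x, φ ((μ.rnDeriv ν x).toReal) ∂ν := by
  have h1 : ∫ x, T x ∂μ = ∫ x, (μ.rnDeriv ν x).toReal • T x ∂ν :=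
    (integral_rnDeriv_smul hac).symm
  have h2 : Integrable (fun x => (μ.rnDeriv ν x).toReal • T x) ν :=
    (integrable_rnDeriv_smul_iff hac).2 hTμ
  rw [h1, ← integral_sub h2 hTν]
  refine integral_mono (h2.sub hTν) hφr fun x => ?_
  have h3 := (hφstar (T x)).1 ⟨(μ.rnDeriv ν x).toReal, ENNReal.toReal_nonneg, rfl⟩
  simp only [smul_eq_mul]
  linarith
end

section
/- Let ν be a probability measure on a measurable space X, let μ be a probability measure with μ ≪ ν and density r = dμ/dν, let φ : ℝ → ℝ be convex with φ(1) = 0, and let φ* be its Fenchel conjugate, φ*(t) = sup_{x ≥ 0} (x·t − φ(x)). Let Y be a type, ℓ : Y × Y → ℝ a loss function, h : X → Y a measurable function, and H a set of measurable functions from X to Y such that for every h' ∈ H the functions x ↦ ℓ(h(x), h'(x)) and x ↦ φ*(ℓ(h(x), h'(x))) are integrable with respect to μ and ν respectively, and φ ∘ r is ν-integrable. Then the discrepancy sup_{h' ∈ H} ( E_{x∼μ}[ℓ(h(x), h'(x))] − E_{x∼ν}[φ*(ℓ(h(x), h'(x)))] ) is at most the f-divergence D_φ(μ‖ν) = ∫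 φ(r) dν. -/
open MeasureTheory

/-- The discrepancy `sup_{h' ∈ H} ( E_μ[ℓ(h, h')] − E_ν[φ*(ℓ(h, h'))] )` over a hypothesis
class `H` of measurable functions is at most the f-divergence `D_φ(μ‖ν) = ∫ φ(dμ/dν) dν`. -/
theorem discrepancy_le_fdiv {X Y : Type*} [MeasurableSpace X] [MeasurableSpace Y]
    (μ ν : Measure X) [IsProbabilityMeasure μ] [IsProbabilityMeasure ν] (hac : μ ≪ ν)
    (φ φstar : ℝ → ℝ) (hconv : ConvexOn ℝ Set.univ φ) (hφ1 : φ 1 = 0)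
    (hφstar : ∀ t, IsLUB {y | ∃ x, 0 ≤ x ∧ y = x * t - φ x} (φstar t))
    (ℓ : Y × Y → ℝ) (h : X → Y) (hh : Measurable h)
    (H : Set (X → Y)) (hH : ∀ h' ∈ H, Measurable h')
    (hint1 : ∀ h' ∈ H, Integrable (fun x => ℓ (h x, h' x)) μ)
    (hint2 : ∀ h' ∈ H, Integrable (fun x => φstar (ℓ (h x, h' x))) ν)
    (hφr : Integrable (fun x => φ ((μ.rnDeriv ν x).toReal)) ν) :
    sSup {d | ∃ h' ∈ H, d = ∫ x, ℓ (h x, h' x) ∂μ - ∫ x, φstar (ℓ (h x, h' x)) ∂ν}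
      ≤ ∫ x, φ ((μ.rnDeriv ν x).toReal) ∂ν := by
  rcases H.eq_empty_or_nonempty with hE | ⟨h0, hh0⟩
  · subst hE
    have hr : ∫ x, (μ.rnDeriv ν x).toReal ∂ν = 1 := by
      rw [Measure.integral_toReal_rnDeriv hac]; simp
    have hcont : ContinuousOn φ Set.univ := hconv.continuousOn isOpen_univ
    have hJ := hconv.map_integral_le hcont isClosed_univ
      (Filter.Eventually.of_forall fun x => Set.mem_univ ((μ.rnDeriv ν x).toReal))
      Measure.integrable_toReal_rnDeriv hφr
    rw [hr, hφ1] at hJ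
    simpa using hJ
  · refine csSup_le ⟨_, h0, hh0, rfl⟩ ?_
    rintro d ⟨h', hh', rfl⟩
    have i1 : Integrable (fun x => (μ.rnDeriv ν x).toReal • ℓ (h x, h' x)) ν :=
      (integrable_rnDeriv_smul_iff hac).2 (hint1 h' hh')
    rw [← integral_rnDeriv_smul hac, ← integral_sub i1 (hint2 h' hh')]
    refine integral_mono (i1.sub (hint2 h' hh')) hφr fun x => ?_
    have := (hφstar (ℓ (h x, h' x))).1 ⟨(μ.rnDeriv ν x).toReal, ENNReal.toReal_nonneg, rfl⟩
    simp only [smul_eq_mul]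
    linarith
end

section
/- Generalization bound (Theorem 1). Let X be a measurable space with probability measures P_s (source) and P_t (target), let Y be a type, and let ℓ : Y × Y → ℝ be a loss function taking values in [0, 1] and satisfying the triangle inequality ℓ(a, c) ≤ ℓ(a, b) + ℓ(b, c) and symmetry ℓ(a, b) = ℓ(b, a) for all a, b, c ∈ Y. Let φ : ℝ → ℝ be convex with φ(1) = 0 and Fenchel conjugate φ*(t) = sup_{x ≥ 0} (x·t − φ(x)), finite on [0, 1]. Let H be a set of measurable functions X → Y, let h ∈ H, let f_s, f_t : X → Y be measurable labeling functions, and let h* ∈ H. Assume all expectations below exist (the relevant composed functions are integrable). Define the risks R_s^ℓ(h) = E_{x∼P_s}[ℓ(h(x), f_s(x))], R_t^ℓ(h) = E_{x∼P_t}[ℓ(h(x), f_t(x))], the discrepancy D_{h,H}^φ(P_s‖P_t) = sup_{h'∈H} | E_{x∼P_s}[ℓ(h(x), h'(x))] − E_{x∼P_t}[φ*(ℓ(h(x), h'(x)))] |, and λ* = R_s^ℓ(h*) + R_t^ℓ(h*). Then R_t^ℓ(h) ≤ R_s^ℓ(h) + D_{h,H}^φ(P_s‖P_t) + λ*. -/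
open MeasureTheory

/-- Generalization bound (Theorem 1 of the paper):
`R_t^ℓ(h) ≤ R_s^ℓ(h) + D_{h,H}^φ(P_s‖P_t) + λ*`, where the loss `ℓ` takes values in
`[0,1]`, satisfies the triangle inequality and symmetry, `φ` is convex with `φ(1) = 0`,
`φstar` is its Fenchel conjugate (finite on `[0,1]`), the discrepancy is
`D_{h,H}^φ(P_s‖P_t) = sup_{h'∈H} |E_{P_s}[ℓ(h,h')] − E_{P_t}[φ*(ℓ(h,h'))]|`, and
`λ* = R_s^ℓ(h*) + R_t^ℓ(h*)` for the ideal joint hypothesis `h* ∈ H`. -/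
theorem generalization_bound {X Y : Type*} [MeasurableSpace X] [MeasurableSpace Y]
    (Ps Pt : Measure X) [IsProbabilityMeasure Ps] [IsProbabilityMeasure Pt]
    (ℓ : Y × Y → ℝ)
    (hℓ01 : ∀ a b, ℓ (a, b) ∈ Set.Icc (0 : ℝ) 1)
    (hℓtri : ∀ a b c, ℓ (a, c) ≤ ℓ (a, b) + ℓ (b, c))
    (hℓsym : ∀ a b, ℓ (a, b) = ℓ (b, a))
    (φ φstar : ℝ → ℝ) (hconv : ConvexOn ℝ Set.univ φ) (hφ1 : φ 1 = 0)
    (hφstar : ∀ t ∈ Set.Icc (0 : ℝ) 1, IsLUB {y | ∃ x, 0 ≤ x ∧ y = x * t - φ x} (φstar t))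
    (H : Set (X → Y)) (hH : ∀ h' ∈ H, Measurable h')
    (h : X → Y) (hhH : h ∈ H)
    (fs ft : X → Y) (hfs : Measurable fs) (hft : Measurable ft)
    (hstar : X → Y) (hstarH : hstar ∈ H)
    (hint_s : Integrable (fun x => ℓ (h x, fs x)) Ps)
    (hint_t : Integrable (fun x => ℓ (h x, ft x)) Pt)
    (hint_s' : Integrable (fun x => ℓ (hstar x, fs x)) Ps)
    (hint_t' : Integrable (fun x => ℓ (hstar x, ft x)) Pt)
    (hint_hh : ∀ h' ∈ H, Integrable (fun x => ℓ (h x, h' x)) Ps)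
    (hint_hh' : ∀ h' ∈ H, Integrable (fun x => φstar (ℓ (h x, h' x))) Pt) :
    ∫ x, ℓ (h x, ft x) ∂Pt ≤
      ∫ x, ℓ (h x, fs x) ∂Ps +
        sSup {d | ∃ h' ∈ H,
          d = |∫ x, ℓ (h x, h' x) ∂Ps - ∫ x, φstar (ℓ (h x, h' x)) ∂Pt|} +
        (∫ x, ℓ (hstar x, fs x) ∂Ps + ∫ x, ℓ (hstar x, ft x) ∂Pt) := by
  have hge : ∀ t ∈ Set.Icc (0 : ℝ) 1, t ≤ φstar t := fun t ht =>
    (hφstar t ht).1 ⟨1, zero_le_one, by rw [hφ1]; ring⟩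
  have h1 : (1 : ℝ) ∈ Set.Icc (0 : ℝ) 1 := ⟨zero_le_one, le_refl _⟩
  have hle : ∀ t ∈ Set.Icc (0 : ℝ) 1, φstar t ≤ φstar 1 := by
    intro t ht
    refine (hφstar t ht).2 ?_
    rintro y ⟨x, hx, rfl⟩
    have h2 : x * 1 - φ x ≤ φstar 1 := (hφstar 1 h1).1 ⟨x, hx, rfl⟩
    have h3 := mul_le_mul_of_nonneg_left ht.2 hx
    linarith
  have hbdd : BddAbove {d | ∃ h' ∈ H,
          d = |∫ x, ℓ (h x, h' x) ∂Ps - ∫ x, φstar (ℓ (h x, h' x)) ∂Pt|} := by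
    refine ⟨1 + φstar 1, ?_⟩
    rintro d ⟨h', hh', rfl⟩
    have a0 : 0 ≤ ∫ x, ℓ (h x, h' x) ∂Ps := integral_nonneg fun x => (hℓ01 _ _).1
    have a1 : ∫ x, ℓ (h x, h' x) ∂Ps ≤ 1 := by
      have := integral_mono (hint_hh h' hh') (integrable_const (1 : ℝ))
        (fun x => (hℓ01 (h x) (h' x)).2)
      simpa using this
    have b0 : 0 ≤ ∫ x, φstar (ℓ (h x, h' x)) ∂Pt :=
      integral_nonneg fun x => (hℓ01 _ _).1.trans (hge _ (hℓ01 _ _))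
    have b1 : ∫ x, φstar (ℓ (h x, h' x)) ∂Pt ≤ φstar 1 := by
      have := integral_mono (hint_hh' h' hh') (integrable_const (φstar 1))
        (fun x => hle _ (hℓ01 (h x) (h' x)))
      simpa using this
    rw [abs_le]
    constructor <;> linarith
  have hD := le_csSup hbdd ⟨hstar, hstarH, rfl⟩
  have hA := neg_abs_le
    (∫ x, ℓ (h x, hstar x) ∂Ps - ∫ x, φstar (ℓ (h x, hstar x)) ∂Pt)
  have hT : ∫ x, ℓ (h x, ft x) ∂Pt ≤
      ∫ x, φstar (ℓ (h x, hstar x)) ∂Pt + ∫ x, ℓ (hstar x, ft x) ∂Pt := by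
    rw [← integral_add (hint_hh' _ hstarH) hint_t']
    refine integral_mono hint_t ((hint_hh' _ hstarH).add hint_t') fun x => ?_
    have e1 := hℓtri (h x) (hstar x) (ft x)
    have e2 := hge _ (hℓ01 (h x) (hstar x))
    show ℓ (h x, ft x) ≤ φstar (ℓ (h x, hstar x)) + ℓ (hstar x, ft x)
    linarith
  have hS : ∫ x, ℓ (h x, hstar x) ∂Ps ≤
      ∫ x, ℓ (h x, fs x) ∂Ps + ∫ x, ℓ (hstar x, fs x) ∂Ps := by
    rw [← integral_add hint_s hint_s']
    refine integral_mono (hint_hh _ hstarH) (hint_s.add hint_s') fun x => ?_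
    have e1 := hℓtri (h x) (fs x) (hstar x)
    have e2 := hℓsym (fs x) (hstar x)
    show ℓ (h x, hstar x) ≤ ℓ (h x, fs x) + ℓ (hstar x, fs x)
    linarith
  linarith
end
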